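/- Let d be a graph pseudometric on a set X with edge set E, let xy ∈ [X]² \ E, let r be a real number with (1/3)·ď(x,y) + (2/3)·d̂(x,y) ≤ r ≤ d̂(x,y) (in particular ď(x,y) ≤ r ≤ d̂(x,y)), and let D = d ∪ {⟨xy,r⟩}. Then for all u, v ∈ X: D̂(u,v) − Ď(u,v) ≥ min{d̂(u,v) − ď(u,v), d̂(x,y) − r, 2·d̈(xy,uv)}. -/

import Mathlib

open scoped Classical

universe u

namespace GraphMetricPaper

variable {X : Type u}

/-- The vertex set `V = ⋃ E` of a graph given by an adjacency relation `E`. -/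
def Vtx (E : X → X → Prop) : Set X := {x | ∃ y, E x y}

/-- Two points are joined by a walk in the graph `E`. -/
def Joined (E : X → X → Prop) (x y : X) : Prop :=
  ∃ (n : ℕ) (c : ℕ → X), c 0 = x ∧ c n = y ∧ ∀ i, i < n → E (c i) (c (i + 1))

/-- The set of weights of walks from `x` to `y`. -/
def walkSums (E : X → X → Prop) (d : X → X → ℝ) (x y : X) : Set ℝ :=
  {s | ∃ (n : ℕ) (c : ℕ → X), c 0 = x ∧ c n = y ∧ (∀ i, i < n → E (c i) (c (i + 1))) ∧
    s = ∑ i ∈ Finset.range n, d (c i) (c (i + 1))}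

/-- The shortest-path pseudometric `d̂` determined by a weight function `d` on a graph `E`. -/
noncomputable def hatd (E : X → X → Prop) (d : X → X → ℝ) (x y : X) : ℝ :=
  sInf (walkSums E d x y)

/-- The function `ď` bounding the possible extensions of `d` from below:
`ď(x,y) = sup_{ab ∈ E} max {0, d(ab) - d̂(a,x) - d̂(y,b)}`. -/
noncomputable def checkd (E : X → X → Prop) (d : X → X → ℝ) (x y : X) : ℝ :=
  sSup ({0} ∪ {r | ∃ a b, E a b ∧ r = d a b - hatd E d a x - hatd E d y b})

/-- The pseudometric `d̈` on doubletons: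
`d̈(xy,uv) = min {d̂(x,u) + d̂(y,v), d̂(x,v) + d̂(y,u)}`. -/
noncomputable def ddot (E : X → X → Prop) (d : X → X → ℝ) (x y u v : X) : ℝ :=
  min (hatd E d x u + hatd E d y v) (hatd E d x v + hatd E d y u)

/-- `d` is a graph pseudometric with edge relation `E`:  `E` is a (symmetric, irreflexive)
connected graph, `d` is a nonnegative symmetric weight on the edges, and `d = d̂` on edges. -/
structure IsGraphPseudometric (E : X → X → Prop) (d : X → X → ℝ) : Prop where
  symm : ∀ ⦃a b⦄, E a b → E b a
  irrefl : ∀ a, ¬ E a a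
  wt_symm : ∀ ⦃a b⦄, E a b → d a b = d b a
  nonneg : ∀ ⦃a b⦄, E a b → 0 ≤ d a b
  connected : ∀ x ∈ Vtx E, ∀ y ∈ Vtx E, Joined E x y
  edge_eq : ∀ ⦃a b⦄, E a b → d a b = hatd E d a b

/-- A graph metric is a graph pseudometric with strictly positive weights. -/
def IsGraphMetric (E : X → X → Prop) (d : X → X → ℝ) : Prop :=
  IsGraphPseudometric E d ∧ ∀ ⦃a b⦄, E a b → 0 < d a b

/-- A floppy graph pseudometric: `ď(x,y) < d̂(x,y)` for every `xy ∈ [V]² \ E`. -/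
def FloppyPseudometric (E : X → X → Prop) (d : X → X → ℝ) : Prop :=
  IsGraphPseudometric E d ∧
    ∀ x ∈ Vtx E, ∀ y ∈ Vtx E, x ≠ y → ¬ E x y → checkd E d x y < hatd E d x y

/-- A floppy graph metric: `ď(x,y) < d̂(x,y)` for every `xy ∈ [V]² \ E`. -/
def FloppyMetric (E : X → X → Prop) (d : X → X → ℝ) : Prop :=
  IsGraphMetric E d ∧
    ∀ x ∈ Vtx E, ∀ y ∈ Vtx E, x ≠ y → ¬ E x y → checkd E d x y < hatd E d x y

/-- The edge relation of the one-step extension `E ∪ {xy}`. -/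
def extEdge (E : X → X → Prop) (x y : X) : X → X → Prop :=
  fun a b => E a b ∨ (a = x ∧ b = y) ∨ (a = y ∧ b = x)

/-- The weight function of the one-step extension `d ∪ {⟨xy, r⟩}`. -/
noncomputable def extWt (d : X → X → ℝ) (x y : X) (r : ℝ) : X → X → ℝ :=
  fun a b => if (a = x ∧ b = y) ∨ (a = y ∧ b = x) then r else d a b

/-- The set `[V]² \ E` of unordered pairs of distinct vertices that are not edges. -/
def nonEdgePairs (E : X → X → Prop) : Set (Sym2 X) :=
  {e | ∃ a b : X, e = s(a, b) ∧ a ≠ b ∧ a ∈ Vtx E ∧ b ∈ Vtx E ∧ ¬ E a b}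

/-- A set of (unordered) weighted pairs, presented as a relation `R`, is a full metric
on `V`: it is symmetric, its domain is exactly `[V]²`, it is single-valued, positive,
and satisfies the triangle inequality. -/
def IsFullMetricRel (V : Set X) (R : X → X → ℝ → Prop) : Prop :=
  (∀ a b r, R a b r → R b a r) ∧
  (∀ a b r, R a b r → a ∈ V ∧ b ∈ V ∧ a ≠ b) ∧
  (∀ a b, a ∈ V → b ∈ V → a ≠ b → ∃ r, R a b r) ∧
  (∀ a b r s, R a b r → R a b s → r = s) ∧
  (∀ a b r, R a b r → 0 < r) ∧
  (∀ a b c r s t, R a b r → R b c s → R a c t → t ≤ r + s)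

/-- A weight function `D` on `[V]²` is a full metric on `V`. -/
def IsFullMetricOn (V : Set X) (D : X → X → ℝ) : Prop :=
  (∀ a b, a ∈ V → b ∈ V → a ≠ b → D a b = D b a) ∧
  (∀ a b, a ∈ V → b ∈ V → a ≠ b → 0 < D a b) ∧
  (∀ a b c, a ∈ V → b ∈ V → c ∈ V → a ≠ b → b ≠ c → a ≠ c → D a c ≤ D a b + D b c)

/-- Player I has a winning strategy in the metric-extending game `Game_d(lam, Fam)`:
there are functions `S1, S2` choosing, for each inning `β < lam` and each sequence of
previous answers of player II, a legal doubleton in `[V]²` and a set from `Fam`, such that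
for every play of player II respecting the strategy, the resulting relation
`d ∪ {⟨x_α y_α, r_α⟩ : α < lam}` is a full metric on `V`. -/
def WinningStratI (V : Set X) (E : X → X → Prop) (d : X → X → ℝ)
    (lam : Ordinal.{u}) (Fam : Set (Set ℝ)) : Prop :=
  ∃ (S1 : ∀ β : Ordinal.{u}, β < lam → (∀ α : Ordinal.{u}, α < β → ℝ) → X × X)
    (S2 : ∀ β : Ordinal.{u}, β < lam → (∀ α : Ordinal.{u}, α < β → ℝ) → Set ℝ),
    (∀ β hβ s, S2 β hβ s ∈ Fam) ∧
    (∀ β hβ s, (S1 β hβ s).1 ∈ V ∧ (S1 β hβ s).2 ∈ V ∧ (S1 β hβ s).1 ≠ (S1 β hβ s).2) ∧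
    (∀ s : ∀ α : Ordinal.{u}, α < lam → ℝ,
      (∀ α (hα : α < lam), s α hα ∈ S2 α hα (fun γ hγ => s γ (hγ.trans hα))) →
      IsFullMetricRel V (fun a b r =>
        (E a b ∧ r = d a b) ∨
        ∃ α, ∃ hα : α < lam,
          ((a = (S1 α hα (fun γ hγ => s γ (hγ.trans hα))).1 ∧
            b = (S1 α hα (fun γ hγ => s γ (hγ.trans hα))).2) ∨
           (a = (S1 α hα (fun γ hγ => s γ (hγ.trans hα))).2 ∧
            b = (S1 α hα (fun γ hγ => s γ (hγ.trans hα))).1)) ∧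
          r = s α hα))

/-- Player II has a winning strategy in the metric-extending game `Game_d(lam, Fam)`:
there is a function `T` assigning to each inning `β < lam` and each sequence of moves of
player I (of length `β + 1`) an answer in the set component of the last move, such that
for every legal play of player I, the resulting relation is not a full metric on `V`. -/
def WinningStratII (V : Set X) (E : X → X → Prop) (d : X → X → ℝ)
    (lam : Ordinal.{u}) (Fam : Set (Set ℝ)) : Prop :=
  ∃ T : ∀ β : Ordinal.{u}, β < lam → (∀ α : Ordinal.{u}, α ≤ β → (X × X) × Set ℝ) → ℝ,
    (∀ β hβ p, (p β le_rfl).2 ∈ Fam → T β hβ p ∈ (p β le_rfl).2) ∧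
    (∀ p : ∀ α : Ordinal.{u}, α < lam → (X × X) × Set ℝ,
      (∀ α hα, (p α hα).1.1 ∈ V ∧ (p α hα).1.2 ∈ V ∧ (p α hα).1.1 ≠ (p α hα).1.2 ∧
        (p α hα).2 ∈ Fam) →
      ¬ IsFullMetricRel V (fun a b r =>
        (E a b ∧ r = d a b) ∨
        ∃ α, ∃ hα : α < lam,
          ((a = (p α hα).1.1 ∧ b = (p α hα).1.2) ∨
           (a = (p α hα).1.2 ∧ b = (p α hα).1.1)) ∧
          r = T α hα (fun γ hγ => p γ (lt_of_le_of_lt hγ hα))))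

/-- The edge relation of the glued graph `E_d = E_p ∪ ⋃_{f ∈ F} E_f`. -/
def gluedEdge (Ep : X → X → Prop) (F : Set ((X → X → Prop) × (X → X → ℝ))) :
    X → X → Prop :=
  fun a b => Ep a b ∨ ∃ f ∈ F, f.1 a b

/-- `Λ(v; B) = inf {d̂(a,v) + d̂(v,b) - d̂(a,b) : a, b ∈ B}`. -/
noncomputable def Lam (E : X → X → Prop) (d : X → X → ℝ) (v : X) (B : Set X) : ℝ :=
  sInf {r | ∃ a ∈ B, ∃ b ∈ B, r = hatd E d a v + hatd E d v b - hatd E d a b}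

/-- The gluing setup: a graph pseudometric `p = (Ep, wp)` and a family `F` of graph
pseudometrics such that each member meets `V_p`, agrees with `p̂` on the intersection of
the vertex sets, and distinct members only meet inside `V_p`; `wd` is the glued weight
function `d = p ∪ ⋃ F` on `E_d = E_p ∪ ⋃_{f ∈ F} E_f`. -/
structure GluingSetup (Ep : X → X → Prop) (wp : X → X → ℝ)
    (F : Set ((X → X → Prop) × (X → X → ℝ))) (wd : X → X → ℝ) : Prop where
  hp : IsGraphPseudometric Ep wp
  hF : ∀ f ∈ F, IsGraphPseudometric f.1 f.2
  meet : ∀ f ∈ F, (Vtx f.1 ∩ Vtx Ep).Nonempty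
  agree : ∀ f ∈ F, ∀ x ∈ Vtx f.1 ∩ Vtx Ep, ∀ y ∈ Vtx f.1 ∩ Vtx Ep, x ≠ y →
    hatd f.1 f.2 x y = hatd Ep wp x y
  inter_sub : ∀ f ∈ F, ∀ g ∈ F, f ≠ g → Vtx f.1 ∩ Vtx g.1 ⊆ Vtx Ep
  wd_p : ∀ ⦃a b⦄, Ep a b → wd a b = wp a b
  wd_F : ∀ f ∈ F, ∀ ⦃a b⦄, f.1 a b → wd a b = f.2 a b

/-!
A walk from `u` to `v` in the extension either avoids the new edge `xy` or crosses it, so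
`D̂(u,v) ≥ min {d̂(u,v), r + d̈(xy,uv)}`. Write `e(u,v) = d̈(xy,uv)`. The functions `d̂` and `e`
obey triangle inequalities graded by the parity of the number of crossings: `d̂ ≤ d̂ + d̂`,
`e ≤ d̂ + e` and `d̂ ≤ e + e`. To bound `Ď(u,v)`, one estimates `D̂(a,u) + D̂(u,v) + D̂(v,b)` from
below for each edge `ab`. For an old edge, a route that crosses `xy` costs at least `r + e(a,b)`
or `2r + d̂(a,b)`, while `d(ab) ≤ ď(x,y) + e(a,b)` by definition of `ď`. For the new edge, a route
whose only crossing lies between `u` and `v` costs at least `r + 2e(u,v)`.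
-/

section Walks

variable {E : X → X → Prop} {d : X → X → ℝ}

theorem Joined.refl (E : X → X → Prop) (a : X) : Joined E a a :=
  ⟨0, fun _ => a, rfl, rfl, fun _ hi => absurd hi (Nat.not_lt_zero _)⟩

theorem Joined.mono {E' : X → X → Prop} (hEE' : ∀ ⦃a b⦄, E a b → E' a b) {a b : X}
    (hab : Joined E a b) : Joined E' a b := by
  obtain ⟨n, c, ha, hb, hc⟩ := hab
  exact ⟨n, c, ha, hb, fun i hi => hEE' (hc i hi)⟩

theorem Joined.walkSums_nonempty {a b : X} (hab : Joined E a b) (d : X → X → ℝ) :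
    (walkSums E d a b).Nonempty := by
  obtain ⟨n, c, ha, hb, hc⟩ := hab
  exact ⟨_, n, c, ha, hb, hc, rfl⟩

theorem zero_mem_walkSums (E : X → X → Prop) (d : X → X → ℝ) (a : X) : 0 ∈ walkSums E d a a :=
  ⟨0, fun _ => a, rfl, rfl, fun _ hi => absurd hi (Nat.not_lt_zero _), by simp⟩

theorem add_mem_walkSums {a b z : X} {s : ℝ} (hab : E a b) (hs : s ∈ walkSums E d b z) :
    d a b + s ∈ walkSums E d a z := by
  obtain ⟨n, c, rfl, hz, hc, rfl⟩ := hs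
  refine ⟨n + 1, fun i => Nat.casesOn i a c, rfl, hz, ?_, ?_⟩
  · rintro (_ | i) hi
    · exact hab
    · exact hc i (Nat.lt_of_succ_lt_succ hi)
  · rw [Finset.sum_range_succ', add_comm]
    rfl

theorem nonneg_of_mem_walkSums (hd₀ : ∀ ⦃a b⦄, E a b → 0 ≤ d a b) {a b : X} {s : ℝ}
    (hs : s ∈ walkSums E d a b) : 0 ≤ s := by
  obtain ⟨n, c, -, -, hc, rfl⟩ := hs
  exact Finset.sum_nonneg fun i hi => hd₀ (hc i (Finset.mem_range.1 hi))

theorem hatd_nonneg (hd₀ : ∀ ⦃a b⦄, E a b → 0 ≤ d a b) (a b : X) : 0 ≤ hatd E d a b :=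
  Real.sInf_nonneg fun _ => nonneg_of_mem_walkSums hd₀

theorem hatd_le_of_mem_walkSums (hd₀ : ∀ ⦃a b⦄, E a b → 0 ≤ d a b) {a b : X} {s : ℝ}
    (hs : s ∈ walkSums E d a b) : hatd E d a b ≤ s :=
  csInf_le ⟨0, fun _ => nonneg_of_mem_walkSums hd₀⟩ hs

theorem hatd_self (hd₀ : ∀ ⦃a b⦄, E a b → 0 ≤ d a b) (a : X) : hatd E d a a = 0 :=
  le_antisymm (hatd_le_of_mem_walkSums hd₀ (zero_mem_walkSums E d a)) (hatd_nonneg hd₀ a a)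

theorem le_hatd_of_le_add {a z : X} (haz : Joined E a z) {f : X → ℝ} (hz : f z ≤ 0)
    (hf : ∀ ⦃b c⦄, E b c → f b ≤ d b c + f c) : f a ≤ hatd E d a z := by
  refine le_csInf (haz.walkSums_nonempty d) ?_
  rintro _ ⟨n, c, rfl, rfl, hc, rfl⟩
  calc f (c 0) ≤ f (c 0) - f (c n) := by linarith
    _ = ∑ i ∈ Finset.range n, (f (c i) - f (c (i + 1))) :=
      (Finset.sum_range_sub' (fun i => f (c i)) n).symm
    _ ≤ ∑ i ∈ Finset.range n, d (c i) (c (i + 1)) :=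
      Finset.sum_le_sum fun i hi =>
        sub_le_iff_le_add.2 (hf (hc i (Finset.mem_range.1 hi)))

theorem hatd_le_add_hatd (hd₀ : ∀ ⦃a b⦄, E a b → 0 ≤ d a b) {a b z : X} (hab : E a b)
    (hbz : Joined E b z) : hatd E d a z ≤ d a b + hatd E d b z := by
  rw [← sub_le_iff_le_add']
  refine le_csInf (hbz.walkSums_nonempty d) fun s hs => ?_
  exact sub_le_iff_le_add'.2 (hatd_le_of_mem_walkSums hd₀ (add_mem_walkSums hab hs))

theorem hatd_le_weight (hd₀ : ∀ ⦃a b⦄, E a b → 0 ≤ d a b) {a b : X} (hab : E a b) :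
    hatd E d a b ≤ d a b := by
  simpa only [hatd_self hd₀, add_zero] using hatd_le_add_hatd hd₀ hab (Joined.refl E b)

theorem hatd_triangle (hd₀ : ∀ ⦃a b⦄, E a b → 0 ≤ d a b) (hE : ∀ a b, Joined E a b)
    (a b c : X) : hatd E d a c ≤ hatd E d a b + hatd E d b c := by
  rw [← sub_le_iff_le_add]
  refine le_hatd_of_le_add (f := fun z => hatd E d z c - hatd E d b c) (hE a b)
    (sub_self _).le fun z w hzw => ?_
  linarith [hatd_le_add_hatd hd₀ hzw (hE w c)]

theorem checkd_nonneg (E : X → X → Prop) (d : X → X → ℝ) (x y : X) : 0 ≤ checkd E d x y :=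
  Real.sSup_nonneg' ⟨0, Or.inl rfl, le_rfl⟩

theorem checkd_le {x y : X} {c : ℝ} (hc : 0 ≤ c)
    (h : ∀ ⦃a b⦄, E a b → d a b - hatd E d a x - hatd E d y b ≤ c) : checkd E d x y ≤ c := by
  refine csSup_le ⟨0, Or.inl rfl⟩ ?_
  rintro _ (rfl | ⟨a, b, hab, rfl⟩)
  exacts [hc, h hab]

theorem ddot_comm_right (E : X → X → Prop) (d : X → X → ℝ) (x y u v : X) :
    ddot E d x y u v = ddot E d x y v u :=
  min_comm _ _

theorem ddot_nonneg (hd₀ : ∀ ⦃a b⦄, E a b → 0 ≤ d a b) (x y u v : X) : 0 ≤ ddot E d x y u v :=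
  le_min (add_nonneg (hatd_nonneg hd₀ _ _) (hatd_nonneg hd₀ _ _))
    (add_nonneg (hatd_nonneg hd₀ _ _) (hatd_nonneg hd₀ _ _))

theorem ddot_self (hd₀ : ∀ ⦃a b⦄, E a b → 0 ≤ d a b) (x y : X) : ddot E d x y x y = 0 := by
  refine le_antisymm ((min_le_left _ _).trans ?_) (ddot_nonneg hd₀ x y x y)
  rw [hatd_self hd₀, hatd_self hd₀, add_zero]

theorem ddot_eq_zero_of_eq_or_swap (hd₀ : ∀ ⦃a b⦄, E a b → 0 ≤ d a b) {x y a b : X}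
    (h : (a = x ∧ b = y) ∨ (a = y ∧ b = x)) : ddot E d x y a b = 0 := by
  rcases h with ⟨rfl, rfl⟩ | ⟨rfl, rfl⟩
  · exact ddot_self hd₀ a b
  · rw [ddot_comm_right, ddot_self hd₀]

end Walks

namespace IsGraphPseudometric

variable {E : X → X → Prop} {d : X → X → ℝ}

theorem joined (hd : IsGraphPseudometric E d) (hvert : ∀ z : X, z ∈ Vtx E) (a b : X) :
    Joined E a b :=
  hd.connected a (hvert a) b (hvert b)

theorem hatd_comm (hd : IsGraphPseudometric E d) (hvert : ∀ z : X, z ∈ Vtx E) (a b : X) :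
    hatd E d a b = hatd E d b a := by
  have hatd_le_swap (a b : X) : hatd E d a b ≤ hatd E d b a := by
    refine le_hatd_of_le_add (f := fun z => hatd E d a z) (hd.joined hvert b a)
      (hatd_self hd.nonneg a).le fun z w hzw => ?_
    rw [hd.wt_symm hzw]
    linarith [hatd_triangle hd.nonneg (hd.joined hvert) a w z,
      hatd_le_weight hd.nonneg (hd.symm hzw)]
  exact le_antisymm (hatd_le_swap a b) (hatd_le_swap b a)

theorem weight_sub_le_hatd (hd : IsGraphPseudometric E d) (hvert : ∀ z : X, z ∈ Vtx E)
    {a b : X} (hab : E a b) (x y : X) :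
    d a b - hatd E d a x - hatd E d y b ≤ hatd E d x y := by
  have tri := hatd_triangle hd.nonneg (hd.joined hvert)
  rw [hd.edge_eq hab]
  linarith [tri a x b, tri x y b]

theorem checkd_le_hatd (hd : IsGraphPseudometric E d) (hvert : ∀ z : X, z ∈ Vtx E) (x y : X) :
    checkd E d x y ≤ hatd E d x y :=
  checkd_le (hatd_nonneg hd.nonneg x y) fun _ _ hab => hd.weight_sub_le_hatd hvert hab x y

theorem weight_sub_le_checkd (hd : IsGraphPseudometric E d) (hvert : ∀ z : X, z ∈ Vtx E)
    {a b : X} (hab : E a b) (x y : X) :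
    d a b - hatd E d a x - hatd E d y b ≤ checkd E d x y := by
  refine le_csSup ⟨hatd E d x y, ?_⟩ (Or.inr ⟨a, b, hab, rfl⟩)
  rintro _ (rfl | ⟨p, q, hpq, rfl⟩)
  exacts [hatd_nonneg hd.nonneg x y, hd.weight_sub_le_hatd hvert hpq x y]

theorem weight_le_checkd_add_ddot (hd : IsGraphPseudometric E d) (hvert : ∀ z : X, z ∈ Vtx E)
    {a b : X} (hab : E a b) (x y : X) :
    d a b ≤ checkd E d x y + ddot E d x y a b := by
  have parallel := hd.weight_sub_le_checkd hvert hab x y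
  have crossed := hd.weight_sub_le_checkd hvert (hd.symm hab) x y
  rw [← hd.wt_symm hab] at crossed
  have comm := hd.hatd_comm hvert
  rw [← sub_le_iff_le_add']
  exact le_min (by linarith [comm a x]) (by linarith [comm b x])

theorem ddot_le_hatd_add_ddot (hd : IsGraphPseudometric E d) (hvert : ∀ z : X, z ∈ Vtx E)
    (x y a u b : X) : ddot E d x y a b ≤ hatd E d a u + ddot E d x y u b := by
  have tri := hatd_triangle hd.nonneg (hd.joined hvert)
  have comm := hd.hatd_comm hvert u a
  rw [ddot, ddot, ← min_add_add_left]
  exact min_le_min (by linarith [tri x u a]) (by linarith [tri y u a])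

theorem ddot_le_ddot_add_hatd (hd : IsGraphPseudometric E d) (hvert : ∀ z : X, z ∈ Vtx E)
    (x y a u b : X) : ddot E d x y a b ≤ ddot E d x y a u + hatd E d u b := by
  rw [ddot_comm_right E d x y a b, ddot_comm_right E d x y a u, hd.hatd_comm hvert u b, add_comm]
  exact hd.ddot_le_hatd_add_ddot hvert x y b u a

theorem hatd_le_ddot_add_ddot (hd : IsGraphPseudometric E d) (hvert : ∀ z : X, z ∈ Vtx E)
    (x y a u b : X) : hatd E d a b ≤ ddot E d x y a u + ddot E d x y u b := by
  have tri := hatd_triangle hd.nonneg (hd.joined hvert)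
  have comm := hd.hatd_comm hvert
  have through_x : hatd E d a b ≤ hatd E d x a + hatd E d x b := comm x a ▸ tri a x b
  have through_y : hatd E d a b ≤ hatd E d y a + hatd E d y b := comm y a ▸ tri a y b
  have x_to_y : hatd E d x b ≤ hatd E d x u + hatd E d y u + hatd E d y b := by
    linarith [tri x u b, tri u y b, comm u y]
  have y_to_x : hatd E d y b ≤ hatd E d y u + hatd E d x u + hatd E d x b := by
    linarith [tri y u b, tri u x b, comm u x]
  have hxu := hatd_nonneg hd.nonneg x u
  have hyu := hatd_nonneg hd.nonneg y u
  rw [ddot, ddot]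
  rcases min_choice (hatd E d x a + hatd E d y u) (hatd E d x u + hatd E d y a) with hau | hau <;>
  rcases min_choice (hatd E d x u + hatd E d y b) (hatd E d x b + hatd E d y u) with hub | hub <;>
  · rw [hau, hub]
    linarith

theorem hatd_le_hatd_add_ddot (hd : IsGraphPseudometric E d) (hvert : ∀ z : X, z ∈ Vtx E)
    (x y a b : X) : hatd E d x y ≤ hatd E d a b + ddot E d x y a b := by
  have tri := hatd_triangle hd.nonneg (hd.joined hvert)
  have comm := hd.hatd_comm hvert
  rw [← sub_le_iff_le_add']
  exact le_min (by linarith [tri x a y, tri a b y, comm b y])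
    (by linarith [tri x b y, tri b a y, comm a b, comm a y])

theorem min_le_hatd_ext (hd : IsGraphPseudometric E d) (hvert : ∀ z : X, z ∈ Vtx E)
    (x y : X) {r : ℝ} (hr : 0 ≤ r) (u v : X) :
    min (hatd E d u v) (r + ddot E d x y u v) ≤
      hatd (extEdge E x y) (extWt d x y r) u v := by
  refine le_hatd_of_le_add (f := fun z => min (hatd E d z v) (r + ddot E d x y z v))
    ((hd.joined hvert u v).mono fun _ _ => Or.inl)
    ((min_le_left _ _).trans (hatd_self hd.nonneg v).le) fun a b hab => ?_
  rw [extWt, ← min_add_add_left]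
  split_ifs with hnew
  · have hab₀ := ddot_eq_zero_of_eq_or_swap hd.nonneg hnew
    have cross_once := hd.ddot_le_ddot_add_hatd hvert x y a b v
    have cross_twice := hd.hatd_le_ddot_add_ddot hvert x y a b v
    exact le_min ((min_le_right _ _).trans (by linarith))
      ((min_le_left _ _).trans (by linarith))
  · have hE := hab.resolve_right hnew
    have hle := hatd_le_weight hd.nonneg hE
    exact min_le_min (hatd_le_add_hatd hd.nonneg hE (hd.joined hvert b v))
      (by linarith [hd.ddot_le_hatd_add_ddot hvert x y a b v])

theorem min_crossing_le_hatd_ext_add_add (hd : IsGraphPseudometric E d)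
    (hvert : ∀ z : X, z ∈ Vtx E) (x y : X) {r : ℝ} (hr : 0 ≤ r) (a u v b : X) :
    min (hatd E d a u + hatd E d u v + hatd E d v b)
        (min (r + ddot E d x y a b) (2 * r + hatd E d a b)) ≤
      hatd (extEdge E x y) (extWt d x y r) a u + hatd (extEdge E x y) (extWt d x y r) u v +
        hatd (extEdge E x y) (extWt d x y r) v b := by
  have legs := hd.min_le_hatd_ext hvert x y hr
  have tri := hatd_triangle hd.nonneg (hd.joined hvert)
  have even_odd := hd.ddot_le_hatd_add_ddot hvert x y
  have odd_even := hd.ddot_le_ddot_add_hatd hvert x y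
  have odd_odd := hd.hatd_le_ddot_add_ddot hvert x y
  simp only [min_le_iff] at legs ⊢
  rcases legs a u with hau | hau <;> rcases legs u v with huv | huv <;>
    rcases legs v b with hvb | hvb
  · exact Or.inl (by linarith)
  · exact Or.inr (Or.inl (by linarith [even_odd a u b, even_odd u v b]))
  · exact Or.inr (Or.inl (by linarith [even_odd a u b, odd_even u v b]))
  · exact Or.inr (Or.inr (by linarith [tri a u b, odd_odd u v b]))
  · exact Or.inr (Or.inl (by linarith [odd_even a u b, tri u v b]))
  · exact Or.inr (Or.inr (by linarith [odd_odd a u b, even_odd u v b]))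
  · exact Or.inr (Or.inr (by linarith [odd_odd a u b, odd_even u v b]))
  · exact Or.inr (Or.inl (by linarith [odd_even a u b, odd_odd u v b]))

theorem min_middle_crossing_le_hatd_ext_add_add (hd : IsGraphPseudometric E d)
    (hvert : ∀ z : X, z ∈ Vtx E) (x y : X) {r : ℝ} (hr : 0 ≤ r) (a u v b : X) :
    min (min (hatd E d a b) (2 * r))
        (r + min (hatd E d u v) (2 * ddot E d x y u v - ddot E d x y a b)) ≤
      hatd (extEdge E x y) (extWt d x y r) a u + hatd (extEdge E x y) (extWt d x y r) u v +
        hatd (extEdge E x y) (extWt d x y r) v b := by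
  have legs := hd.min_le_hatd_ext hvert x y hr
  have tri := hatd_triangle hd.nonneg (hd.joined hvert)
  have direct_ends : ddot E d x y u v ≤ hatd E d a u + ddot E d x y a b + hatd E d v b := by
    rw [hd.hatd_comm hvert a u, hd.hatd_comm hvert v b]
    linarith [hd.ddot_le_hatd_add_ddot hvert x y u a v, hd.ddot_le_ddot_add_hatd hvert x y a b v]
  have nonneg := hatd_nonneg hd.nonneg
  have e_nonneg := ddot_nonneg hd.nonneg x y
  rw [← min_add_add_left]
  simp only [min_le_iff] at legs ⊢
  rcases legs a u with hau | hau <;> rcases legs u v with huv | huv <;>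
    rcases legs v b with hvb | hvb
  · exact Or.inl (Or.inl (by linarith [tri a u b, tri u v b]))
  · exact Or.inr (Or.inl (by linarith [nonneg a u, e_nonneg v b]))
  · exact Or.inr (Or.inr (by linarith))
  · exact Or.inl (Or.inr (by linarith [nonneg a u, e_nonneg u v, e_nonneg v b]))
  · exact Or.inr (Or.inl (by linarith [e_nonneg a u, nonneg v b]))
  · exact Or.inl (Or.inr (by linarith [e_nonneg a u, nonneg u v, e_nonneg v b]))
  · exact Or.inl (Or.inr (by linarith [e_nonneg a u, e_nonneg u v, nonneg v b]))
  · exact Or.inl (Or.inr (by linarith [e_nonneg a u, e_nonneg u v, e_nonneg v b]))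

theorem add_extWt_le_hatd_ext_add_add (hd : IsGraphPseudometric E d)
    (hvert : ∀ z : X, z ∈ Vtx E) {x y a b : X} (hab : extEdge E x y a b) {r : ℝ} (hr : 0 ≤ r)
    (u v : X) {m : ℝ} (m_le_uv : m ≤ hatd E d u v - checkd E d u v)
    (m_le_upper : m ≤ hatd E d x y - r) (m_le_lower : m ≤ r - checkd E d x y)
    (m_le_ddot : m ≤ 2 * ddot E d x y u v) :
    m + extWt d x y r a b ≤
      hatd (extEdge E x y) (extWt d x y r) a u + hatd (extEdge E x y) (extWt d x y r) u v +
        hatd (extEdge E x y) (extWt d x y r) v b := by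
  have hxy := checkd_nonneg E d x y
  have huv := checkd_nonneg E d u v
  rw [extWt]
  split_ifs with hnew
  · refine le_trans ?_ (hd.min_middle_crossing_le_hatd_ext_add_add hvert x y hr a u v b)
    have hxy_le := hd.hatd_le_hatd_add_ddot hvert x y a b
    rw [ddot_eq_zero_of_eq_or_swap hd.nonneg hnew] at hxy_le ⊢
    rw [add_comm]
    exact le_min (le_min (by linarith) (by linarith))
      (add_le_add_right (le_min (by linarith) (by linarith)) r)
  · refine le_trans ?_ (hd.min_crossing_le_hatd_ext_add_add hvert x y hr a u v b)
    have hE := hab.resolve_right hnew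
    exact le_min (by linarith [hd.weight_sub_le_checkd hvert hE u v])
      (le_min (by linarith [hd.weight_le_checkd_add_ddot hvert hE x y])
        (by linarith [hd.edge_eq hE]))

end IsGraphPseudometric

theorem one_step_extension_estimates₅_general {E : X → X → Prop} {d : X → X → ℝ}
    (hd : IsGraphPseudometric E d) (hvert : ∀ z : X, z ∈ Vtx E) (x y : X) {r : ℝ}
    (hr : checkd E d x y + hatd E d x y ≤ 2 * r) (u v : X) :
    min (min (hatd E d u v - checkd E d u v) (hatd E d x y - r)) (2 * ddot E d x y u v) ≤
      hatd (extEdge E x y) (extWt d x y r) u v -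
        checkd (extEdge E x y) (extWt d x y r) u v := by
  have hxy := checkd_nonneg E d x y
  have huv := checkd_nonneg E d u v
  have huv_ddot := ddot_nonneg hd.nonneg x y u v
  have hr₀ : 0 ≤ r := by linarith [hatd_nonneg hd.nonneg x y]
  set m := min (min (hatd E d u v - checkd E d u v) (hatd E d x y - r)) (2 * ddot E d x y u v)
  have m_le_uv : m ≤ hatd E d u v - checkd E d u v := (min_le_left _ _).trans (min_le_left _ _)
  have m_le_upper : m ≤ hatd E d x y - r := (min_le_left _ _).trans (min_le_right _ _)
  have m_le_ddot : m ≤ 2 * ddot E d x y u v := min_le_right _ _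
  have m_le_lower : m ≤ r - checkd E d x y := by linarith
  rw [le_sub_comm]
  refine checkd_le (sub_nonneg.2 ?_) fun a b hab => ?_
  · exact (le_min (by linarith) (by linarith)).trans (hd.min_le_hatd_ext hvert x y hr₀ u v)
  · linarith [hd.add_extWt_le_hatd_ext_add_add hvert hab hr₀ u v m_le_uv m_le_upper m_le_lower
      m_le_ddot]

/-- With `D = d ∪ {⟨xy, r⟩}` for
`(1/3)ď(x,y) + (2/3)d̂(x,y) ≤ r ≤ d̂(x,y)` (in particular `ď(x,y) ≤ r ≤ d̂(x,y)`):
`D̂(u,v) − Ď(u,v) ≥ min {d̂(u,v) − ď(u,v), d̂(x,y) − r, 2·d̈(xy,uv)}` for all `u, v`. -/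
theorem one_step_extension_estimates₅ (E : X → X → Prop) (d : X → X → ℝ)
    (hd : IsGraphPseudometric E d) (hvert : ∀ z : X, z ∈ Vtx E)
    (x y : X) (hxy : x ≠ y) (hnE : ¬ E x y) (r : ℝ)
    (hr₀ : checkd E d x y ≤ r)
    (hr₁ : (1 / 3) * checkd E d x y + (2 / 3) * hatd E d x y ≤ r)
    (hr₂ : r ≤ hatd E d x y) :
    ∀ u v : X,
      min (min (hatd E d u v - checkd E d u v) (hatd E d x y - r))
          (2 * ddot E d x y u v) ≤
        hatd (extEdge E x y) (extWt d x y r) u v -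
          checkd (extEdge E x y) (extWt d x y r) u v :=
  one_step_extension_estimates₅_general hd hvert x y
    (by linarith [hd.checkd_le_hatd hvert x y])

end GraphMetricPaper
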